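/- arXiv:2108.12312 — 3 statements merged into one kernel-verified Lean document; each statement's English description precedes it below -/
import Mathlib

section
/- Let p ∈ R be an idempotent and let a, b ∈ R satisfy p*a = a, a*p = 0, b*p = b, p*b = 0. Set m = a + b. Then m is group invertible if and only if a*b and b*a are group invertible and (a*b)^π * a = 0 and b * (a*b)^π = 0; in this case m^# = (a*b)^# * a + b * (a*b)^# = a * (b*a)^# + (b*a)^# * b. -/
/-!
Write `m = a + b`. The Peirce conditions give `a * a = 0` and `b * b = 0`, so `m * m = a*b + b*a`
commutes with `p`. If `c = m^#` exists, then `e = c * c` is the group inverse of `m * m`, hence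
`e` commutes with everything commuting with `m * m` (`IsGroupInvOf.commute`), in particular with
`p`, and therefore with `a = p * m` and `b = m * p`. It follows that `(a*b)^# = p * e` and
`(b*a)^# = (1 - p) * e`, and all the remaining identities reduce to `c = e * m`.
Conversely, if `d = (a*b)^#` satisfies the two annihilation conditions, then `d * a + b * d` is
verified directly to be a group inverse of `m`.
-/

variable {R : Type*} [Ring R]

/-- `c` is a group inverse of `a`. -/
def IsGroupInvOf (a c : R) : Prop := a * c * a = a ∧ c * a * c = c ∧ a * c = c * a

/-- `a` is group invertible. -/
def GroupInvertible (a : R) : Prop := ∃ c, IsGroupInvOf a c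

/-- The group inverse `a^#` (junk value `0` if it does not exist). -/
noncomputable def gi (a : R) : R :=
  haveI := Classical.dec (GroupInvertible a)
  if h : GroupInvertible a then h.choose else 0

/-- The spectral idempotent `a^π = 1 - a * a^#`. -/
noncomputable def sp (a : R) : R := 1 - a * gi a

theorem IsGroupInvOf.commute {x y z : R} (h : IsGroupInvOf x y) (hz : x * z = z * x) :
    y * z = z * y := by
  obtain ⟨h1, h2, h3⟩ := h
  -- Both sides equal `y * x * z * y`.
  have e1 : y * z = y * x * z * y := by
    calc y * z = y * x * y * z := by rw [h2]
      _ = y * (x * y) * z := by noncomm_ring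
      _ = y * y * (x * z) := by rw [h3]; noncomm_ring
      _ = y * y * z * x := by rw [hz]; noncomm_ring
      _ = y * y * z * (x * y * x) := by rw [h1]
      _ = y * y * (z * x) * (y * x) := by noncomm_ring
      _ = y * (y * x) * z * (y * x) := by rw [← hz]; noncomm_ring
      _ = y * x * y * (z * x) * y := by
        rw [show y * (y * x) = y * x * y by rw [mul_assoc, h3]]; simp only [mul_assoc]; rw [h3]
      _ = y * (x * y * x) * z * y := by rw [← hz]; noncomm_ring
      _ = y * x * z * y := by rw [h1]
  have e2 : z * y = y * x * z * y := by
    calc z * y = z * (y * x * y) := by rw [h2]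
      _ = z * x * y * y := by rw [← h3]; noncomm_ring
      _ = x * y * x * z * y * y := by rw [← hz, h1]
      _ = y * x * (x * z) * y * y := by rw [h3]; noncomm_ring
      _ = y * x * z * (x * y * y) := by rw [hz]; noncomm_ring
      _ = y * x * z * y := by rw [h3, h2]
  rw [e1, e2]

theorem IsGroupInvOf.unique {x y z : R} (hy : IsGroupInvOf x y) (hz : IsGroupInvOf x z) :
    y = z := by
  obtain ⟨h1, h2, h3⟩ := hy
  obtain ⟨k1, k2, k3⟩ := hz
  have e : x * y = x * z := by
    calc x * y = x * z * x * y := by rw [k1]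
      _ = z * (x * y * x) := by rw [k3, mul_assoc x y x, ← h3, mul_assoc, mul_assoc]
      _ = x * z := by rw [h1, k3]
  calc y = y * (x * y) := by rw [← mul_assoc, h2]
    _ = x * y * z := by rw [e, ← mul_assoc, ← h3, e]
    _ = z := by rw [e, k3, k2]

theorem IsGroupInvOf.gi_eq {x y : R} (h : IsGroupInvOf x y) : gi x = y := by
  have hx : GroupInvertible x := ⟨y, h⟩
  unfold gi
  rw [dif_pos hx]
  exact hx.choose_spec.unique h

theorem GroupInvertible.isGroupInvOf_gi {x : R} (h : GroupInvertible x) :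
    IsGroupInvOf x (gi x) := by
  obtain ⟨y, hy⟩ := h
  rwa [hy.gi_eq]

theorem IsGroupInvOf.sq {x y : R} (h : IsGroupInvOf x y) : IsGroupInvOf (x * x) (y * y) := by
  obtain ⟨h1, h2, h3⟩ := h
  have e1 : x * x * (y * y) = x * y := by
    calc x * x * (y * y) = x * (x * y) * y := by noncomm_ring
      _ = x * y * x * y := by rw [show x * (x * y) = x * y * x by rw [mul_assoc, ← h3]]
      _ = x * y := by rw [h1]
  have e2 : y * y * (x * x) = x * y := by
    calc y * y * (x * x) = y * (y * x) * x := by noncomm_ring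
      _ = y * x * y * x := by rw [show y * (y * x) = y * x * y by rw [mul_assoc, h3]]
      _ = x * y := by rw [h2, h3]
  refine ⟨?_, ?_, e1.trans e2.symm⟩
  · rw [e1, ← mul_assoc, h1]
  · rw [e2, ← mul_assoc, h3, h2]

/-- If an idempotent `q` commutes with `x`, it also commutes with the group inverse `y` of `x`, and
`q * y` is the group inverse of the corner `q * x`. -/
theorem IsGroupInvOf.corner {x y q : R} (h : IsGroupInvOf x y) (hq : q * q = q)
    (hqx : x * q = q * x) : IsGroupInvOf (q * x) (q * y) := by
  have hqy := h.commute hqx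
  obtain ⟨h1, h2, h3⟩ := h
  have e1 : q * x * (q * y) = q * (x * y) := by
    rw [mul_assoc q x, ← mul_assoc x q, hqx, mul_assoc q x, ← mul_assoc q q, hq]
  have e2 : q * y * (q * x) = q * (y * x) := by
    rw [mul_assoc q y, ← mul_assoc y q, hqy, mul_assoc q y, ← mul_assoc q q, hq]
  have c : x * y * q = q * (x * y) := by rw [mul_assoc, hqy, ← mul_assoc, hqx, mul_assoc]
  refine ⟨?_, ?_, by rw [e1, e2, h3]⟩
  · rw [e1, mul_assoc q, ← mul_assoc _ q x, c, mul_assoc q _ x, h1, ← mul_assoc, hq]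
  · rw [e2, ← h3, mul_assoc q, ← mul_assoc _ q y, c, mul_assoc q _ y, h3, h2, ← mul_assoc, hq]

/-- The explicit group inverse of `a + b` built from `d = (a*b)^#`. -/
theorem isGroupInvOf_add_of_mul {a b d : R} (haa : a * a = 0) (hbb : b * b = 0)
    (hd : IsGroupInvOf (a * b) d) (ha : a * b * d * a = a) (hb : b * (a * b * d) = b) :
    IsGroupInvOf (a + b) (d * a + b * d) := by
  obtain ⟨h1, h2, h3⟩ := hd
  have had : a * d = 0 := by
    calc a * d = a * (d * (a * b) * d) := by rw [h2]
      _ = a * a * (b * d * d) := by rw [← h3]; noncomm_ring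
      _ = 0 := by rw [haa, zero_mul]
  have hdb : d * b = 0 := by
    calc d * b = d * (a * b * d) * b := by rw [← mul_assoc, h2]
      _ = d * d * a * (b * b) := by rw [h3]; noncomm_ring
      _ = 0 := by rw [hbb, mul_zero]
  have e1 : (a + b) * (d * a + b * d) = a * b * d + b * d * a := by
    calc _ = a * d * a + a * b * d + b * d * a + b * b * d := by noncomm_ring
      _ = _ := by rw [had, hbb]; simp
  have e2 : (d * a + b * d) * (a + b) = a * b * d + b * d * a := by
    calc _ = d * (a * a) + d * (a * b) + b * d * a + b * (d * b) := by noncomm_ring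
      _ = _ := by rw [haa, hdb, h3]; simp
  refine ⟨?_, ?_, e1.trans e2.symm⟩
  · rw [e1]
    calc _ = a * b * d * a + a * b * (d * b) + b * d * (a * a) + b * (d * (a * b)) := by
          noncomm_ring
      _ = _ := by rw [ha, hdb, haa, ← h3, hb]; simp
  · rw [e2]
    calc _ = (a * b * d) * d * a + a * b * (d * b) * d + b * d * (a * d) * a
          + b * (d * (a * b) * d) := by noncomm_ring
      _ = _ := by rw [hdb, had, h3, h2]; simp

theorem antidiagonal_group_invertible (p a b : R) (hp : p * p = p)
    (hpa : p * a = a) (hap : a * p = 0) (hbp : b * p = b) (hpb : p * b = 0) :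
    (GroupInvertible (a + b) ↔
      GroupInvertible (a * b) ∧ GroupInvertible (b * a) ∧
        sp (a * b) * a = 0 ∧ b * sp (a * b) = 0) ∧
    (GroupInvertible (a + b) →
      gi (a + b) = gi (a * b) * a + b * gi (a * b) ∧
      gi (a + b) = a * gi (b * a) + gi (b * a) * b) := by
  have haa : a * a = 0 := by
    calc a * a = a * p * a := by rw [mul_assoc, hpa]
      _ = 0 := by rw [hap, zero_mul]
  have hbb : b * b = 0 := by
    calc b * b = b * p * b := by rw [hbp]
      _ = 0 := by rw [mul_assoc, hpb, mul_zero]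
  have hmm : (a + b) * (a + b) = a * b + b * a := by
    calc _ = a * a + a * b + b * a + b * b := by noncomm_ring
      _ = _ := by rw [haa, hbb]; simp
  have hl : p * (a * b + b * a) = a * b := by
    rw [mul_add, ← mul_assoc, ← mul_assoc, hpa, hpb]; simp
  have hr : (a * b + b * a) * p = a * b := by
    rw [add_mul, mul_assoc, mul_assoc, hap, hbp]; simp
  have forward : ∀ c, IsGroupInvOf (a + b) c →
      IsGroupInvOf (a * b) (p * (c * c)) ∧ IsGroupInvOf (b * a) ((1 - p) * (c * c)) ∧
      p * (c * c) = c * c * p ∧ a * (c * c) = c * c * a ∧ b * (c * c) = c * c * b := by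
    intro c hc
    have hs := hc.sq
    rw [hmm] at hs
    have hcomm : (a * b + b * a) * p = p * (a * b + b * a) := hr.trans hl.symm
    have hep := hs.commute hcomm
    have h1 := hs.corner hp hcomm
    have h2 := hs.corner (q := 1 - p) (by simp [mul_sub, sub_mul, hp])
      (by rw [mul_sub, sub_mul, hcomm]; simp)
    rw [hl] at h1
    rw [sub_mul, hl, one_mul, add_sub_cancel_left] at h2
    have hea : c * c * a = a * (c * c) := by
      have hma : p * (a + b) = a := by rw [mul_add, hpa, hpb, add_zero]
      have hm : c * c * (a + b) = (a + b) * (c * c) := by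
        rw [mul_assoc, ← hc.2.2, ← mul_assoc, ← hc.2.2, mul_assoc]
      calc c * c * a = c * c * p * (a + b) := by rw [mul_assoc _ p, hma]
        _ = p * (a + b) * (c * c) := by rw [hep, mul_assoc, hm, mul_assoc]
        _ = a * (c * c) := by rw [hma]
    have heb : c * c * b = b * (c * c) := by
      have hmb : (a + b) * p = b := by rw [add_mul, hap, hbp, zero_add]
      have hm : c * c * (a + b) = (a + b) * (c * c) := by
        rw [mul_assoc, ← hc.2.2, ← mul_assoc, ← hc.2.2, mul_assoc]
      calc c * c * b = c * c * (a + b) * p := by rw [mul_assoc _ _ p, hmb]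
        _ = (a + b) * p * (c * c) := by rw [hm, mul_assoc, hep, mul_assoc]
        _ = b * (c * c) := by rw [hmb]
    exact ⟨h1, h2, hep.symm, hea.symm, heb.symm⟩
  refine ⟨⟨?_, ?_⟩, ?_⟩
  · rintro ⟨c, hc⟩
    obtain ⟨h1, h2, hep, hea, heb⟩ := forward c hc
    -- `m = m² c² m`, whose two Peirce corners are the required identities.
    have key : (a * b + b * a) * (c * c) * (a + b) = a + b := by
      rw [← hmm]
      calc _ = (a + b) * ((a + b) * c) * (c * (a + b)) := by simp only [mul_assoc]
        _ = (a + b) * c * (a + b) * c * (a + b) := by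
          rw [congrArg ((a + b) * ·) hc.2.2]; simp only [mul_assoc]
        _ = a + b := by rw [hc.1, hc.1]
    refine ⟨⟨_, h1⟩, ⟨_, h2⟩, ?_, ?_⟩
    · rw [sp, h1.gi_eq, sub_mul, one_mul, sub_eq_zero]
      calc a = p * (a + b) := by rw [mul_add, hpa, hpb, add_zero]
        _ = p * ((a * b + b * a) * (c * c) * (a + b)) := by rw [key]
        _ = p * (a * b + b * a) * (c * c) * (a + b) := by noncomm_ring
        _ = a * b * (c * c) * a + a * (b * (c * c)) * b := by rw [hl]; noncomm_ring
        _ = a * b * (c * c) * a + a * (c * c) * (b * b) := by rw [heb]; noncomm_ring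
        _ = a * (b * p) * (c * c) * a := by rw [hbb, hbp]; simp
        _ = a * b * (p * (c * c)) * a := by noncomm_ring
    · rw [sp, h1.gi_eq, mul_sub, mul_one, sub_eq_zero]
      calc b = (a + b) * p := by rw [add_mul, hap, hbp, zero_add]
        _ = (a * b + b * a) * (c * c) * (a + b) * p := by rw [key]
        _ = (a * b + b * a) * (c * c) * ((a + b) * p) := by noncomm_ring
        _ = (a * b + b * a) * (c * c * b) := by
          rw [add_mul a b p, hap, hbp, zero_add, mul_assoc]
        _ = a * (b * b) * (c * c) + b * a * b * (c * c) := by rw [← heb]; noncomm_ring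
        _ = b * a * (b * p) * (c * c) := by rw [hbb, hbp]; simp
        _ = b * (a * b * (p * (c * c))) := by noncomm_ring
  · rintro ⟨h1, -, h3, h4⟩
    rw [sp, sub_mul, one_mul, sub_eq_zero] at h3
    rw [sp, mul_sub, mul_one, sub_eq_zero] at h4
    exact ⟨_, isGroupInvOf_add_of_mul haa hbb h1.isGroupInvOf_gi h3.symm h4.symm⟩
  · rintro ⟨c, hc⟩
    obtain ⟨h1, h2, hep, hea, heb⟩ := forward c hc
    have hce : c = c * c * a + c * c * b := by
      rw [← mul_add, mul_assoc, ← hc.2.2, ← mul_assoc, hc.2.1]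
    rw [hc.gi_eq, h1.gi_eq, h2.gi_eq]
    constructor
    · calc c = c * c * a + c * c * b := hce
        _ = c * c * (p * a) + (b * p) * (c * c) := by rw [hpa, hbp, heb]
        _ = (c * c * p) * a + b * (p * (c * c)) := by noncomm_ring
        _ = _ := by rw [← hep]
    · calc c = c * c * a + c * c * b := hce
        _ = a * (c * c) - (a * p) * (c * c) + (c * c * b - c * c * (p * b)) := by
          rw [hap, hpb, hea]; simp
        _ = a * ((1 - p) * (c * c)) + (c * c * b - (c * c * p) * b) := by noncomm_ring
        _ = _ := by rw [← hep]; noncomm_ring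
end

section
/- Let p, q ∈ R be idempotents. Then p - q is group invertible if and only if p - q1 and q4 are group invertible and the following hold: (p-q1)^# * q2 = q2 * q4^#, q2 * q4^π = 0, (p-q1)^π * q2 = 0, q3 * (p-q1)^# = q4^# * q3, q4^π * q3 = 0, q3 * (p-q1)^π = 0. In this case (p - q)^# = (p-q1)^#*(p-q1) - (p-q1)^#*q2 - q4^#*q3 - q4^#*q4. -/
/-!
Put `A = (p - q)²`. It commutes with `p` and `q`, and its two Peirce corners with respect to `p`
are `p * A = p - q1` and `(1 - p) * A = q4`. A group inverse commutes with everything its element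
commutes with (`IsGroupInvOf.comm_of_comm`), so a group inverse `e` of `A` commutes with `p`
and `q`.

If `p - q` has group inverse `c`, then `e = c²` is a group inverse of `A`, and its corners `p * e`
and `(1 - p) * e` are the group inverses of `p - q1` and `q4`. Since `1 - A * e` commutes with `p`
and `q` and kills `p - q`, the listed identities follow, and `c = (p - q) * e` is the stated formula.

Conversely, `e = (p - q1)^# + q4^#` is a group inverse of `A`. The conditions
`q2 * q4^π = 0` and `q3 * (p - q1)^π = 0` give `(p - q) * (1 - A * e) = 0`, which makes `(p - q) * e` a group inverse of `p - q`.
-/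

variable {R : Type*} [Ring R]

section GroupInverse

variable {S : Type*} [Ring S]

/-- The group inverse of `a` lies in the double commutant of `a`. -/
lemma IsGroupInvOf.comm_of_comm {a c t : S} (h : IsGroupInvOf a c) (ht : a * t = t * a) :
    c * t = t * c := by
  obtain ⟨h1, h2, h3⟩ := h
  -- The idempotent `a * c` commutes with `t`: both products equal `(a * c) * t * (a * c)`.
  have k1 : a * c * t = a * c * t * (a * c) := by
    calc a * c * t = c * (a * t) := by rw [h3, mul_assoc]
      _ = c * (t * (a * c * a)) := by rw [ht, h1]
      _ = c * (t * a) * (c * a) := by simp only [mul_assoc]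
      _ = (c * a) * t * (c * a) := by rw [← ht]; simp only [mul_assoc]
      _ = a * c * t * (a * c) := by rw [h3]
  have k2 : t * (a * c) = a * c * t * (a * c) := by
    calc t * (a * c) = (a * t) * c := by rw [ht, mul_assoc]
      _ = (a * c * a) * t * c := by rw [h1]
      _ = a * c * (a * t) * c := by simp only [mul_assoc]
      _ = a * c * t * (a * c) := by rw [ht]; simp only [mul_assoc]
  have k : a * c * t = t * (a * c) := k1.trans k2.symm
  calc c * t = c * (a * c * t) := by rw [← mul_assoc, ← mul_assoc, h2]
    _ = c * (t * a) * c := by rw [k]; simp only [mul_assoc]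
    _ = (c * a) * t * c := by rw [← ht]; simp only [mul_assoc]
    _ = t * (c * a * c) := by rw [← h3, k, h3]; simp only [mul_assoc]
    _ = t * c := by rw [h2]

lemma IsGroupInvOf.unique_s3 {a c d : S} (hc : IsGroupInvOf a c) (hd : IsGroupInvOf a d) :
    c = d := by
  obtain ⟨c1, c2, c3⟩ := hc
  obtain ⟨d1, d2, d3⟩ := hd
  -- The idempotents `a * c` and `a * d` both equal `(a * d) * (a * c)`.
  have k1 : a * c = a * d * (a * c) := by rw [← mul_assoc, d1]
  have k2 : a * d = a * d * (a * c) := by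
    calc a * d = d * (a * c * a) := by rw [c1, d3]
      _ = (d * a) * (c * a) := by simp only [mul_assoc]
      _ = a * d * (a * c) := by rw [c3, d3]
  have k : a * c = a * d := k1.trans k2.symm
  calc c = c * (a * c) := by rw [← mul_assoc, c2]
    _ = (a * c) * d := by rw [k, ← mul_assoc, ← c3, k]
    _ = d := by rw [k, d3, d2]

lemma GroupInvertible.gi_spec {a : S} (h : GroupInvertible a) : IsGroupInvOf a (gi a) := by
  unfold gi
  rw [dif_pos h]
  exact h.choose_spec

lemma IsGroupInvOf.gi_eq_s3 {a c : S} (h : IsGroupInvOf a c) : gi a = c :=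
  (GroupInvertible.gi_spec ⟨c, h⟩).unique_s3 h

lemma IsGroupInvOf.sq_s3 {a c : S} (h : IsGroupInvOf a c) : IsGroupInvOf (a * a) (c * c) := by
  obtain ⟨h1, h2, h3⟩ := h
  have k : a * a * (c * c) = a * c := by
    calc a * a * (c * c) = a * (a * c) * c := by simp only [mul_assoc]
      _ = a * (c * a) * c := by rw [h3]
      _ = a * c := by rw [← mul_assoc, h1]
  have k' : c * c * (a * a) = c * a := by
    calc c * c * (a * a) = c * (c * a) * a := by simp only [mul_assoc]
      _ = c * (a * c) * a := by rw [h3]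
      _ = c * a := by rw [← mul_assoc, h2]
  refine ⟨?_, ?_, ?_⟩
  · rw [k, ← mul_assoc, h1]
  · rw [k', ← mul_assoc, h2]
  · rw [k, k', h3]

/-- A commuting idempotent cuts a group inverse down to a corner. -/
lemma IsGroupInvOf.corner_s3 {a c s : S} (h : IsGroupInvOf a c) (hs : s * s = s)
    (ha : a * s = s * a) : IsGroupInvOf (s * a) (s * c) := by
  have hc : c * s = s * c := h.comm_of_comm ha
  obtain ⟨h1, h2, h3⟩ := h
  have k : s * a * (s * c) = s * (a * c) := by
    calc s * a * (s * c) = s * (a * s) * c := by simp only [mul_assoc]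
      _ = (s * s) * (a * c) := by rw [ha]; simp only [mul_assoc]
      _ = s * (a * c) := by rw [hs]
  have k' : s * c * (s * a) = s * (c * a) := by
    calc s * c * (s * a) = s * (c * s) * a := by simp only [mul_assoc]
      _ = (s * s) * (c * a) := by rw [hc]; simp only [mul_assoc]
      _ = s * (c * a) := by rw [hs]
  refine ⟨?_, ?_, ?_⟩
  · calc s * a * (s * c) * (s * a) = s * a * (s * c * (s * a)) := mul_assoc _ _ _
      _ = s * (a * s) * (c * a) := by rw [k']; simp only [mul_assoc]
      _ = (s * s) * (a * c * a) := by rw [ha]; simp only [mul_assoc]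
      _ = s * a := by rw [hs, h1]
  · calc s * c * (s * a) * (s * c) = s * c * (s * a * (s * c)) := mul_assoc _ _ _
      _ = s * (c * s) * (a * c) := by rw [k]; simp only [mul_assoc]
      _ = (s * s) * (c * a * c) := by rw [hc]; simp only [mul_assoc]
      _ = s * c := by rw [hs, h2]
  · rw [k, k', h3]

/-- Group inverses of orthogonal elements add up. -/
lemma IsGroupInvOf.add_of_orthogonal {a b x y : S} (ha : IsGroupInvOf a x)
    (hb : IsGroupInvOf b y) (hab : a * b = 0) (hba : b * a = 0) :
    IsGroupInvOf (a + b) (x + y) := by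
  have hxb : x * b = 0 := by
    rw [← ha.2.1, mul_assoc x a x, ha.2.2, mul_assoc, mul_assoc, hab, mul_zero, mul_zero]
  have hbx : b * x = 0 := by
    rw [← ha.2.1, ← ha.2.2, ← mul_assoc, ← mul_assoc, hba, zero_mul, zero_mul]
  have hya : y * a = 0 := by
    rw [← hb.2.1, mul_assoc y b y, hb.2.2, mul_assoc, mul_assoc, hba, mul_zero, mul_zero]
  have hay : a * y = 0 := by
    rw [← hb.2.1, ← hb.2.2, ← mul_assoc, ← mul_assoc, hab, zero_mul, zero_mul]
  obtain ⟨a1, a2, a3⟩ := ha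
  obtain ⟨b1, b2, b3⟩ := hb
  have k : (a + b) * (x + y) = a * x + b * y := by
    rw [add_mul, mul_add, mul_add, hay, hbx, add_zero, zero_add]
  have k' : (x + y) * (a + b) = x * a + y * b := by
    rw [add_mul, mul_add, mul_add, hxb, hya, add_zero, zero_add]
  refine ⟨?_, ?_, ?_⟩
  · rw [k, add_mul, mul_add, mul_add, a1, b1, mul_assoc a x b, hxb, mul_assoc b y a, hya]
    simp
  · rw [k', add_mul, mul_add, mul_add, a2, b2, mul_assoc x a y, hay, mul_assoc y b x, hbx]
    simp
  · rw [k, k', a3, b3]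

/-- If `a²` has group inverse `e` and `a` is fixed by the idempotent `a² e`, then `a e` is a group
inverse of `a`. -/
lemma IsGroupInvOf.of_sq {a e : S} (h : IsGroupInvOf (a * a) e) (ha : a * (a * a * e) = a) :
    IsGroupInvOf a (a * e) := by
  have hc : e * a = a * e := h.comm_of_comm (mul_assoc _ _ _)
  have hc2 : a * e * a = a * a * e := by rw [mul_assoc, hc, mul_assoc]
  refine ⟨?_, ?_, ?_⟩
  · rw [mul_assoc, hc2, ha]
  · rw [hc2, ← mul_assoc, ← hc2]
    calc a * e * a * a * e = a * (e * (a * a) * e) := by simp only [mul_assoc]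
      _ = a * e := by rw [h.2.1]
  · rw [hc2, mul_assoc]

end GroupInverse

section Idempotents

variable {S : Type*} [Ring S] {p q : S}

lemma sq_sub_comm_left (hp : p * p = p) (hq : q * q = q) :
    (p - q) * (p - q) * p = p * ((p - q) * (p - q)) := by
  have e : (p - q) * (p - q) = p + q - p * q - q * p := by
    rw [sub_mul, mul_sub, mul_sub, hp, hq]; abel
  rw [e]
  simp only [sub_mul, mul_sub, add_mul, mul_add, mul_assoc, hp]
  simp only [← mul_assoc, hp]
  abel

lemma sq_sub_comm_right (hp : p * p = p) (hq : q * q = q) :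
    (p - q) * (p - q) * q = q * ((p - q) * (p - q)) := by
  have h := sq_sub_comm_left hq hp
  rwa [← neg_sub p q, neg_mul_neg] at h

lemma corner_sq_sub (hp : p * p = p) (hq : q * q = q) :
    p * ((p - q) * (p - q)) = p - p * q * p := by
  rw [sub_mul, mul_sub p p q, mul_sub q p q, hp, hq]
  simp only [mul_sub, ← mul_assoc, hp]
  abel

lemma compl_corner_sq_sub (hp : p * p = p) (hq : q * q = q) :
    (1 - p) * ((p - q) * (p - q)) = (1 - p) * q * (1 - p) := by
  rw [sub_mul 1 p, corner_sq_sub hp hq, sub_mul p q, mul_sub p p q, mul_sub q p q, hp, hq]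
  simp only [mul_sub, sub_mul, one_mul, mul_one]
  abel

end Idempotents

theorem group_inv_p_sub_q (p q q1 q2 q3 q4 : R) (hp : p * p = p) (hq : q * q = q)
    (h1 : q1 = p * q * p) (h2 : q2 = p * q * (1 - p))
    (h3 : q3 = (1 - p) * q * p) (h4 : q4 = (1 - p) * q * (1 - p)) :
    (GroupInvertible (p - q) ↔
      GroupInvertible (p - q1) ∧ GroupInvertible q4 ∧
        gi (p - q1) * q2 = q2 * gi q4 ∧ q2 * sp q4 = 0 ∧ sp (p - q1) * q2 = 0 ∧
        q3 * gi (p - q1) = gi q4 * q3 ∧ sp q4 * q3 = 0 ∧ q3 * sp (p - q1) = 0) ∧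
    (GroupInvertible (p - q) →
      gi (p - q) = gi (p - q1) * (p - q1) - gi (p - q1) * q2 - gi q4 * q3 - gi q4 * q4) := by
  set A := (p - q) * (p - q) with hA
  have hAp : A * p = p * A := sq_sub_comm_left hp hq
  have hAq : A * q = q * A := sq_sub_comm_right hp hq
  have hb : p - q1 = p * A := by rw [h1]; exact (corner_sq_sub hp hq).symm
  have hd : q4 = (1 - p) * A := by rw [h4]; exact (compl_corner_sq_sub hp hq).symm
  have ha : p - q = p * A - q2 - q3 - (1 - p) * A := by
    rw [← hb, ← hd, h1, h2, h3, h4]; noncomm_ring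
  clear h1 h4
  obtain ⟨r, hr⟩ : ∃ r, r = 1 - p := ⟨_, rfl⟩
  rw [← hr] at h2 h3 hd ha
  have hpr : p * r = 0 := by rw [hr, mul_sub, hp, mul_one, sub_self]
  have hrp : r * p = 0 := by rw [hr, sub_mul, hp, one_mul, sub_self]
  have hrr : r * r = r := by nth_rw 1 [hr]; rw [sub_mul, hpr, one_mul, sub_zero]
  have hAr : A * r = r * A := by rw [hr, mul_sub, sub_mul, hAp, mul_one, one_mul]
  have p2 : p * q2 = q2 := by rw [h2, ← mul_assoc, ← mul_assoc, hp]
  have r2 : q2 * r = q2 := by rw [h2, mul_assoc, hrr]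
  have p2' : q2 * p = 0 := by rw [h2, mul_assoc, hrp, mul_zero]
  have r3 : r * q3 = q3 := by rw [h3, ← mul_assoc, ← mul_assoc, hrr]
  have p3 : q3 * p = q3 := by rw [h3, mul_assoc, hp]
  have r3' : q3 * r = 0 := by rw [h3, mul_assoc, hpr, mul_zero]
  have forward : ∀ c, IsGroupInvOf (p - q) c →
      (GroupInvertible (p - q1) ∧ GroupInvertible q4 ∧
        gi (p - q1) * q2 = q2 * gi q4 ∧ q2 * sp q4 = 0 ∧ sp (p - q1) * q2 = 0 ∧
        q3 * gi (p - q1) = gi q4 * q3 ∧ sp q4 * q3 = 0 ∧ q3 * sp (p - q1) = 0) ∧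
      gi (p - q) = gi (p - q1) * (p - q1) - gi (p - q1) * q2 - gi q4 * q3 - gi q4 * q4 := by
    intro c hc
    obtain ⟨e, he⟩ : ∃ e, e = c * c := ⟨_, rfl⟩
    have hE : IsGroupInvOf A e := he ▸ hc.sq_s3
    have hep : e * p = p * e := hE.comm_of_comm hAp
    have heq : e * q = q * e := hE.comm_of_comm hAq
    have her : e * r = r * e := hE.comm_of_comm hAr
    have he2 : e * q2 = q2 * e := by
      have : Commute e q2 := h2 ▸ (Commute.mul_right (Commute.mul_right hep heq) her)
      exact this
    have he3 : e * q3 = q3 * e := by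
      have : Commute e q3 := h3 ▸ (Commute.mul_right (Commute.mul_right her heq) hep)
      exact this
    have hA2 : A * q2 = q2 * A := by
      have : Commute A q2 := h2 ▸ (Commute.mul_right (Commute.mul_right hAp hAq) hAr)
      exact this
    have hA3 : A * q3 = q3 * A := by
      have : Commute A q3 := h3 ▸ (Commute.mul_right (Commute.mul_right hAr hAq) hAp)
      exact this
    have hB : IsGroupInvOf (p - q1) (p * e) := hb ▸ hE.corner_s3 hp hAp
    have hD : IsGroupInvOf q4 (r * e) := hd ▸ hE.corner_s3 hrr hAr
    have hc' : c = (p - q) * e := by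
      rw [he, ← mul_assoc, hc.2.2, hc.2.1]
    have hbb : (p - q1) * (p * e) = p * (A * e) := by
      rw [hb, mul_assoc, ← mul_assoc A, hAp, mul_assoc p A e, ← mul_assoc p p, hp]
    have hdd : q4 * (r * e) = r * (A * e) := by
      rw [hd, mul_assoc, ← mul_assoc A, hAr, mul_assoc r A e, ← mul_assoc r r, hrr]
    -- `g = A * e` is the idempotent `(p - q) * c`; since `(p - q) * (1 - g) = 0`, multiplication
    -- by `1 - g` identifies `q` with `p` and hence kills the off-diagonal corners `q2` and `q3`.
    obtain ⟨g, hg⟩ : ∃ g, g = A * e := ⟨_, rfl⟩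
    have comm_g : ∀ t, A * t = t * A → e * t = t * e → g * t = t * g := by
      intro t h h'
      rw [hg, mul_assoc, h', ← mul_assoc, h, mul_assoc]
    have hgp := comm_g p hAp hep
    have hgr := comm_g r hAr her
    have hg2 := comm_g q2 hA2 he2
    have hg3 := comm_g q3 hA3 he3
    have hgg : g = (p - q) * c := by rw [hg, hc', hA, mul_assoc]
    have hag : (p - q) * (1 - g) = 0 := by
      rw [hgg, hc.2.2, mul_sub, ← mul_assoc, hc.1, mul_one, sub_self]
    have hqf : q * (1 - g) = p * (1 - g) := by
      rw [sub_mul] at hag; exact (sub_eq_zero.mp hag).symm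
    have hfp : p * (1 - g) = (1 - g) * p := by
      rw [mul_sub, sub_mul, hgp, mul_one, one_mul]
    have hfr : r * (1 - g) = (1 - g) * r := by
      rw [mul_sub, sub_mul, hgr, mul_one, one_mul]
    have f2 : q2 * (1 - g) = 0 := by
      rw [h2, mul_assoc, hfr, ← mul_assoc, mul_assoc p q, hqf, ← mul_assoc, hp, mul_assoc,
        ← hfr, ← mul_assoc, hpr, zero_mul]
    have f3 : q3 * (1 - g) = 0 := by
      rw [h3, mul_assoc, hfp, ← mul_assoc, mul_assoc r q, hqf, ← mul_assoc, hrp, zero_mul,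
        zero_mul]
    have g2 : q2 * g = q2 := by
      rw [mul_sub, mul_one] at f2; exact (sub_eq_zero.mp f2).symm
    have g3 : q3 * g = q3 := by
      rw [mul_sub, mul_one] at f3; exact (sub_eq_zero.mp f3).symm
    refine ⟨⟨⟨_, hB⟩, ⟨_, hD⟩, ?_⟩, ?_⟩
    · unfold sp
      rw [hB.gi_eq_s3, hD.gi_eq_s3, hbb, hdd, ← hg]
      refine ⟨?_, ?_, ?_, ?_, ?_, ?_⟩
      · rw [← hep, mul_assoc, p2, ← mul_assoc, r2, he2]
      · rw [mul_sub, mul_one, ← mul_assoc, r2, g2, sub_self]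
      · rw [sub_mul, one_mul, mul_assoc, hg2, g2, p2, sub_self]
      · rw [← her, mul_assoc, r3, ← mul_assoc, p3, he3]
      · rw [sub_mul, one_mul, mul_assoc, hg3, g3, r3, sub_self]
      · rw [mul_sub, mul_one, ← mul_assoc, p3, g3, sub_self]
    · rw [hc.gi_eq_s3, hB.gi_eq_s3, hD.gi_eq_s3, ← hB.2.2, ← hD.2.2, hbb, hdd, hc', ha,
        sub_mul, sub_mul, sub_mul, mul_assoc p A e, mul_assoc r A e, ← hep, ← her, mul_assoc e p, p2,
        mul_assoc e r, r3, he2, he3]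
  refine ⟨⟨?_, ?_⟩, ?_⟩
  · rintro ⟨c, hc⟩
    exact (forward c hc).1
  · rintro ⟨hB, hD, -, c2, -, -, -, c3⟩
    have hx := hB.gi_spec
    have hy := hD.gi_spec
    unfold sp at c2 c3
    generalize gi (p - q1) = x at *
    generalize gi q4 = y at *
    rw [hb] at hx c3
    rw [hd] at hy c2
    have hbd : p * A * (r * A) = 0 := by
      rw [mul_assoc, ← mul_assoc A, hAr, mul_assoc r A A, ← mul_assoc p r, hpr, zero_mul]
    have hdb : r * A * (p * A) = 0 := by
      rw [mul_assoc, ← mul_assoc A, hAp, mul_assoc p A A, ← mul_assoc r p, hrp, zero_mul]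
    have hsum : p * A + r * A = A := by rw [← add_mul, hr, add_sub_cancel, one_mul]
    have hE : IsGroupInvOf A (x + y) := by
      have h := hx.add_of_orthogonal hy hbd hdb
      rwa [hsum] at h
    have e2 : A * (x + y) = p * A * x + r * A * y := by
      -- The mixed products vanish because `x` and `y` lie in complementary corners.
      have hxr : r * A * x = 0 := by
        rw [← hx.2.1, ← hx.2.2, ← mul_assoc, ← mul_assoc, hdb, zero_mul, zero_mul]
      have hyp : p * A * y = 0 := by
        rw [← hy.2.1, ← hy.2.2, ← mul_assoc, ← mul_assoc, hbd, zero_mul, zero_mul]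
      nth_rw 1 [← hsum]
      rw [add_mul, mul_add, mul_add, hxr, hyp, add_zero, zero_add]
    have k2 : q2 * (p * A * x + r * A * y) = q2 := by
      rw [mul_sub, mul_one] at c2
      rw [mul_add, ← sub_eq_zero.mp c2, mul_assoc p, ← mul_assoc q2, p2', zero_mul, zero_add]
    have k3 : q3 * (p * A * x + r * A * y) = q3 := by
      rw [mul_sub, mul_one] at c3
      rw [mul_add, ← sub_eq_zero.mp c3, mul_assoc r, ← mul_assoc q3, r3', zero_mul, add_zero]
    have kb : p * A * (p * A * x + r * A * y) = p * A := by
      rw [mul_add, ← mul_assoc _ (r * A), hbd, zero_mul, add_zero, hx.2.2, ← mul_assoc, hx.1]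
    have kd : r * A * (p * A * x + r * A * y) = r * A := by
      rw [mul_add, ← mul_assoc _ (p * A), hdb, zero_mul, zero_add, hy.2.2, ← mul_assoc, hy.1]
    refine ⟨(p - q) * (x + y), IsGroupInvOf.of_sq hE ?_⟩
    rw [← hA, e2, ha, sub_mul, sub_mul, sub_mul, kb, k2, k3, kd]
  · rintro ⟨c, hc⟩
    exact (forward c hc).2
end

section
/- Let p, q ∈ R be idempotents such that p - q is invertible in R, and set f = p*(p-q)⁻¹ and g = (p-q)⁻¹*p. Then f and g are idempotents with f*R = p*R, f° = q*R, g*R = q° and g° = p°; moreover (1-p)*f = 0 and g*(1-p) = 0. -/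
/-!
With `u = (p - q)⁻¹`, the identities `p * (p - q) = (p - q) * (1 - q)` and
`(p - q) * p = (1 - q) * (p - q)` turn into `u * p = (1 - q) * u` and `p * u = u * (1 - q)`, and
hence `p * u * p = p`. So `f = p * u = u * (1 - q)` and `g = u * p = (1 - q) * u`, with `u`
invertible; the first form of `f` gives its image `p*R`, the second its annihilator `(1 - q)° = q*R`,
and likewise `g` has annihilator `p°` and image `(1 - q)*R = q°`.
-/

variable {R : Type*} [Ring R]

/-- The right multiples `x*R`. -/
def rMul (x : R) : Set R := {z | ∃ y, z = x * y}

/-- The right annihilator `x°`. -/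
def rAnn (x : R) : Set R := {y | x * y = 0}

theorem fg_invertible_case (p q u f g : R) (hp : p * p = p) (hq : q * q = q)
    (hu1 : (p - q) * u = 1) (hu2 : u * (p - q) = 1)
    (hf : f = p * u) (hg : g = u * p) :
    f * f = f ∧ g * g = g ∧
      rMul f = rMul p ∧ rAnn f = rMul q ∧
      rMul g = rAnn q ∧ rAnn g = rAnn p ∧
      (1 - p) * f = 0 ∧ g * (1 - p) = 0 := by
  subst hf hg
  -- `p * (p - q) = (p - q) * (1 - q)`; multiply by `u` on both sides.
  have hup : u * p = (1 - q) * u := by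
    have h : p * (p - q) = (p - q) * (1 - q) := by
      simp only [mul_sub, sub_mul, hp, hq, mul_one]; abel
    calc u * p = u * (p * (p - q)) * u := by simp only [mul_assoc, hu1, mul_one]
      _ = u * (p - q) * ((1 - q) * u) := by rw [h]; simp only [mul_assoc]
      _ = (1 - q) * u := by rw [hu2, one_mul]
  -- `(p - q) * p = (1 - q) * (p - q)`; multiply by `u` on both sides.
  have hpu : p * u = u * (1 - q) := by
    have h : (p - q) * p = (1 - q) * (p - q) := by
      simp only [mul_sub, sub_mul, hp, hq, one_mul]; abel
    calc p * u = u * ((p - q) * p) * u := by rw [← mul_assoc u, hu2, one_mul]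
      _ = u * (1 - q) * ((p - q) * u) := by rw [h]; simp only [mul_assoc]
      _ = u * (1 - q) := by rw [hu1, mul_one]
  have hpup : p * u * p = p := by
    have h : p * (1 - q) = p * (p - q) := by simp only [mul_sub, hp, mul_one]
    rw [mul_assoc, hup, ← mul_assoc, h, mul_assoc, hu1, mul_one]
  have hcancel : ∀ y, u * y = 0 → y = 0 := fun y hy => by
    rw [← one_mul y, ← hu1, mul_assoc, hy, mul_zero]
  refine ⟨?_, ?_, ?_, ?_, ?_, ?_, ?_, ?_⟩
  · rw [← mul_assoc, hpup]
  · rw [mul_assoc, ← mul_assoc p, hpup]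
  · ext z
    constructor
    · rintro ⟨y, rfl⟩
      exact ⟨u * y, mul_assoc _ _ _⟩
    · rintro ⟨y, rfl⟩
      exact ⟨p * y, by rw [← mul_assoc, hpup]⟩
  · ext y
    constructor
    · intro (hy : p * u * y = 0)
      rw [hpu, mul_assoc] at hy
      have h := hcancel _ hy
      rw [sub_mul, one_mul] at h
      exact ⟨y, sub_eq_zero.mp h⟩
    · rintro ⟨y, rfl⟩
      change p * u * (q * y) = 0
      rw [hpu, mul_assoc, ← mul_assoc _ q, sub_mul, one_mul, hq, sub_self, zero_mul, mul_zero]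
  · ext y
    constructor
    · rintro ⟨y, rfl⟩
      change q * (u * p * y) = 0
      rw [hup, mul_assoc, ← mul_assoc q, mul_sub, mul_one, hq, sub_self, zero_mul]
    · intro (hy : q * y = 0)
      refine ⟨(p - q) * y, ?_⟩
      rw [hup, mul_assoc, ← mul_assoc u, hu2, one_mul, sub_mul, one_mul, hy, sub_zero]
  · ext y
    constructor
    · intro (hy : u * p * y = 0)
      exact hcancel _ (by rw [← mul_assoc, hy])
    · intro (hy : p * y = 0)
      change u * p * y = 0
      rw [mul_assoc, hy, mul_zero]
  · rw [← mul_assoc, sub_mul, one_mul, hp, sub_self, zero_mul]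
  · rw [mul_assoc, mul_sub, mul_one, hp, sub_self, mul_zero]
end
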